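/- arXiv:2512.18603 — 4 statements merged into one kernel-verified Lean document; each statement's English description precedes it below -/
import Mathlib

section
/- Let (Λ, Σ_Λ, ρ) be a probability space, let the settings range over i, j ∈ {1, 2} and the outcomes over a, b ∈ {−1, +1}, and let p_A(a | i, λ), p_B(b | j, λ) be measurable in λ, nonnegative, and satisfy Σ_{a ∈ {−1,+1}} p_A(a | i, λ) = 1 and Σ_{b ∈ {−1,+1}} p_B(b | j, λ) = 1 for every i, j, λ. Define the joint distribution p(a, b | i, j) = ∫_Λ p_A(a | i, λ) p_B(b | j, λ) dρ(λ) and the correlators E_{ij} = Σ_{a,b} a·b·p(a, b | i, j). Then |E₁₁ + E₁₂ + E₂₁ − E₂₂| ≤ 2. -/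
open MeasureTheory

/-- The CHSH inequality for four real numbers in `[-1, 1]`. -/
theorem abs_chsh_le_two {x y z w : ℝ} (hx : |x| ≤ 1) (hy : |y| ≤ 1) (hz : |z| ≤ 1)
    (hw : |w| ≤ 1) : |x * z + x * w + y * z - y * w| ≤ 2 := by
  have h₁ : |x * (z + w)| ≤ |z + w| := by
    rw [abs_mul]
    exact mul_le_of_le_one_left (abs_nonneg _) hx
  have h₂ : |y * (z - w)| ≤ |z - w| := by
    rw [abs_mul]
    exact mul_le_of_le_one_left (abs_nonneg _) hy
  have h₃ : |z + w| + |z - w| ≤ 2 := by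
    rw [abs_le] at hz hw
    rcases abs_cases (z + w) with h | h <;> rcases abs_cases (z - w) with h' | h' <;> linarith
  calc |x * z + x * w + y * z - y * w| = |x * (z + w) + y * (z - w)| := by ring_nf
    _ ≤ |x * (z + w)| + |y * (z - w)| := abs_add_le _ _
    _ ≤ 2 := by linarith

/-- CHSH bound for stochastic Bell-local models: with response kernels
`p_A(a|i,λ)`, `p_B(b|j,λ)` (measurable in `λ`, nonnegative, normalized over
outcomes `a, b ∈ {-1, +1}`), the joint distribution
`p(a,b|i,j) = ∫ p_A(a|i,λ) p_B(b|j,λ) dρ(λ)` has correlators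
`E i j = ∑_{a,b} a·b·p(a,b|i,j)` satisfying `|E₁₁ + E₁₂ + E₂₁ − E₂₂| ≤ 2`. -/
theorem chsh_bound_stochastic_hidden_variable
    {Λ : Type*} [MeasurableSpace Λ] (ρ : Measure Λ) [IsProbabilityMeasure ρ]
    (pA pB : Fin 2 → ℤ → Λ → ℝ)
    (hA_meas : ∀ i a, Measurable (pA i a)) (hB_meas : ∀ j b, Measurable (pB j b))
    (hA_nonneg : ∀ i a lam, 0 ≤ pA i a lam) (hB_nonneg : ∀ j b lam, 0 ≤ pB j b lam)
    (hA_sum : ∀ i lam, ∑ a ∈ ({-1, 1} : Finset ℤ), pA i a lam = 1)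
    (hB_sum : ∀ j lam, ∑ b ∈ ({-1, 1} : Finset ℤ), pB j b lam = 1)
    (p : ℤ → ℤ → Fin 2 → Fin 2 → ℝ)
    (hp : ∀ a b i j, p a b i j = ∫ lam, pA i a lam * pB j b lam ∂ρ)
    (E : Fin 2 → Fin 2 → ℝ)
    (hE : ∀ i j, E i j =
      ∑ a ∈ ({-1, 1} : Finset ℤ), ∑ b ∈ ({-1, 1} : Finset ℤ),
        (a : ℝ) * (b : ℝ) * p a b i j) :
    |E 0 0 + E 0 1 + E 1 0 - E 1 1| ≤ 2 := by
  have hA_sum' (i lam) : pA i (-1) lam + pA i 1 lam = 1 := by simpa using hA_sum i lam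
  have hB_sum' (j lam) : pB j (-1) lam + pB j 1 lam = 1 := by simpa using hB_sum j lam
  have hA_le (i lam) (a : ℤ) (ha : a = -1 ∨ a = 1) : pA i a lam ≤ 1 := by
    rcases ha with rfl | rfl <;>
      linarith [hA_sum' i lam, hA_nonneg i (-1) lam, hA_nonneg i 1 lam]
  have hB_le (j lam) (b : ℤ) (hb : b = -1 ∨ b = 1) : pB j b lam ≤ 1 := by
    rcases hb with rfl | rfl <;>
      linarith [hB_sum' j lam, hB_nonneg j (-1) lam, hB_nonneg j 1 lam]
  have h_int (i j) (a b : ℤ) (ha : a = -1 ∨ a = 1) (hb : b = -1 ∨ b = 1) :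
      Integrable (fun lam => pA i a lam * pB j b lam) ρ := by
    refine Integrable.of_bound ((hA_meas i a).mul (hB_meas j b)).aestronglyMeasurable 1
      (.of_forall fun lam => ?_)
    rw [Real.norm_of_nonneg (mul_nonneg (hA_nonneg i a lam) (hB_nonneg j b lam))]
    exact mul_le_one₀ (hA_le i lam a ha) (hB_nonneg j b lam) (hB_le j lam b hb)
  let A (i : Fin 2) (lam : Λ) : ℝ := pA i 1 lam - pA i (-1) lam
  let B (j : Fin 2) (lam : Λ) : ℝ := pB j 1 lam - pB j (-1) lam
  have hE_has (i j) : Integrable (fun lam => A i lam * B j lam) ρ ∧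
      E i j = ∫ lam, A i lam * B j lam ∂ρ := by
    have h₁ := h_int i j (-1) (-1) (.inl rfl) (.inl rfl)
    have h₂ := h_int i j (-1) 1 (.inl rfl) (.inr rfl)
    have h₃ := h_int i j 1 (-1) (.inr rfl) (.inl rfl)
    have h₄ := h_int i j 1 1 (.inr rfl) (.inr rfl)
    have h_expand : (fun lam => A i lam * B j lam) = fun lam =>
        pA i (-1) lam * pB j (-1) lam - pA i (-1) lam * pB j 1 lam
          - pA i 1 lam * pB j (-1) lam + pA i 1 lam * pB j 1 lam := by
      funext lam
      simp only [A, B]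
      ring
    rw [h_expand]
    refine ⟨((h₁.sub h₂).sub h₃).add h₄, ?_⟩
    rw [integral_add (by exact (h₁.sub h₂).sub h₃) h₄, integral_sub (by exact h₁.sub h₂) h₃,
      integral_sub h₁ h₂, hE]
    simp [hp]
    ring
  have hA_abs (i lam) : |A i lam| ≤ 1 := by
    rw [abs_le]
    constructor <;> simp only [A] <;>
      linarith [hA_sum' i lam, hA_nonneg i (-1) lam, hA_nonneg i 1 lam]
  have hB_abs (j lam) : |B j lam| ≤ 1 := by
    rw [abs_le]
    constructor <;> simp only [B] <;>
      linarith [hB_sum' j lam, hB_nonneg j (-1) lam, hB_nonneg j 1 lam]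
  obtain ⟨i₀₀, e₀₀⟩ := hE_has 0 0
  obtain ⟨i₀₁, e₀₁⟩ := hE_has 0 1
  obtain ⟨i₁₀, e₁₀⟩ := hE_has 1 0
  obtain ⟨i₁₁, e₁₁⟩ := hE_has 1 1
  rw [e₀₀, e₀₁, e₁₀, e₁₁, ← integral_add' i₀₀ i₀₁, ← integral_add' (i₀₀.add i₀₁) i₁₀,
    ← integral_sub' ((i₀₀.add i₀₁).add i₁₀) i₁₁, ← Real.norm_eq_abs]
  refine (norm_integral_le_of_norm_le_const (C := 2) (.of_forall fun lam => ?_)).trans (by simp)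
  exact abs_chsh_le_two (hA_abs 0 lam) (hA_abs 1 lam) (hB_abs 0 lam) (hB_abs 1 lam)
end

section
/- Fix τ > L > 0 and set x_A = (τ, −L) and x_B = (τ, L) in two-dimensional Minkowski space. Then for every v ∈ (0, 1), the point x_B is spacelike separated from Λ_v x_A: Q(Λ_v x_A − x_B) < 0. -/
/-- Minkowski quadratic form `Q(t, x) = t² − x²` on ℝ². -/
def Q (p : ℝ × ℝ) : ℝ := p.1 ^ 2 - p.2 ^ 2

/-- Lorentz factor `γ = (1 − v²)^(−1/2)`. -/
noncomputable def lorentzGamma (v : ℝ) : ℝ := 1 / Real.sqrt (1 - v ^ 2)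

/-- Lorentz boost with velocity `v`: `Λ_v(t, x) = (γ(t − vx), γ(x − vt))`. -/
noncomputable def boost (v : ℝ) (p : ℝ × ℝ) : ℝ × ℝ :=
  (lorentzGamma v * (p.1 - v * p.2), lorentzGamma v * (p.2 - v * p.1))

theorem lorentzGamma_mul_one_sub_lt_one {v : ℝ} (h0 : 0 < v) (h1 : v < 1) :
    lorentzGamma v * (1 - v) < 1 := by
  have hs : 0 < Real.sqrt (1 - v ^ 2) := Real.sqrt_pos.2 (by nlinarith)
  rw [lorentzGamma, one_div_mul_eq_div, div_lt_one hs]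
  exact Real.lt_sqrt_of_sq_lt (by nlinarith)

theorem one_lt_lorentzGamma_mul_one_add {v : ℝ} (h0 : 0 < v) (h1 : v < 1) :
    1 < lorentzGamma v * (1 + v) := by
  have hs : 0 < Real.sqrt (1 - v ^ 2) := Real.sqrt_pos.2 (by nlinarith)
  rw [lorentzGamma, one_div_mul_eq_div, one_lt_div hs]
  exact (Real.sqrt_lt' (by linarith)).2 (by nlinarith)

/-- The interval `Q (Λ_v p - q)` factored in light-cone coordinates `t + x` and `t - x`. -/
theorem Q_boost_sub (v : ℝ) (p q : ℝ × ℝ) :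
    Q (boost v p - q) =
      (lorentzGamma v * (1 - v) * (p.1 + p.2) - (q.1 + q.2)) *
        (lorentzGamma v * (1 + v) * (p.1 - p.2) - (q.1 - q.2)) := by
  simp only [Q, boost, Prod.fst_sub, Prod.snd_sub]
  ring

/-- With `x_A = (τ, −L)`, `x_B = (τ, L)` for `τ > L > 0`, the point `x_B`
is spacelike separated from `Λ_v x_A` for every `v ∈ (0, 1)`:
`Q(Λ_v x_A − x_B) < 0`. -/
theorem boosted_xA_spacelike_from_xB (τ L : ℝ) (hL : 0 < L) (hτL : L < τ)
    (v : ℝ) (hv : v ∈ Set.Ioo (0 : ℝ) 1) :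
    Q (boost v (τ, -L) - (τ, L)) < 0 := by
  have hm := lorentzGamma_mul_one_sub_lt_one hv.1 hv.2
  have hp := one_lt_lorentzGamma_mul_one_add hv.1 hv.2
  rw [Q_boost_sub]
  apply mul_neg_of_neg_of_pos
  · dsimp only
    nlinarith [mul_pos (sub_pos.2 hm) (sub_pos.2 hτL)]
  · dsimp only
    nlinarith [mul_pos (sub_pos.2 hp) (add_pos hL (hL.trans hτL))]
end

section
/- Fix τ > L > 0 and set x_A = (τ, −L) and x_B = (τ, L) in two-dimensional Minkowski space, and let v ∈ [0, 1). Then x_A and Λ_v x_B are lightlike separated (Q(Λ_v x_B − x_A) = 0) if and only if v = 2Lτ/(τ² + L²); for every other v ∈ [0, 1) they are spacelike separated (Q(Λ_v x_B − x_A) < 0). In particular, for all v with 0 ≤ v < 2Lτ/(τ² + L²), the points x_A and Λ_v x_B are spacelike separated. -/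
/-- The separation of `x_A` and `Λ_v x_B`, multiplied by a positive factor, is minus a square. -/
theorem Q_boost_sub_mul_eq_neg_sq (τ L v : ℝ) (hγ : lorentzGamma v ^ 2 * (1 - v ^ 2) = 1) :
    Q (boost v (τ, L) - (τ, -L)) *
        (lorentzGamma v * (τ ^ 2 + L ^ 2 - 2 * L * τ * v) + (τ ^ 2 - L ^ 2)) =
      -(2 * (lorentzGamma v * ((τ ^ 2 + L ^ 2) * v - 2 * L * τ)) ^ 2) := by
  simp only [Q, boost, Prod.fst_sub, Prod.snd_sub]
  generalize lorentzGamma v = γ at *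
  have hQ : (γ * (τ - v * L) - τ) ^ 2 - (γ * (L - v * τ) - -L) ^ 2 =
      2 * ((τ ^ 2 - L ^ 2) - γ * (τ ^ 2 + L ^ 2 - 2 * L * τ * v)) := by
    linear_combination (τ ^ 2 - L ^ 2) * hγ
  rw [hQ]
  linear_combination (-2 * (τ ^ 2 - L ^ 2) ^ 2) * hγ

/-- With `x_A = (τ, −L)`, `x_B = (τ, L)` for `τ > L > 0` and `v ∈ [0, 1)`:
`x_A` and `Λ_v x_B` are lightlike separated iff `v = 2Lτ/(τ² + L²)`; for every
other `v ∈ [0, 1)` they are spacelike separated; in particular they are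
spacelike separated whenever `0 ≤ v < 2Lτ/(τ² + L²)`. -/
theorem boosted_xB_separation_from_xA (τ L : ℝ) (hL : 0 < L) (hτL : L < τ)
    (v : ℝ) (hv : v ∈ Set.Ico (0 : ℝ) 1) :
    (Q (boost v (τ, L) - (τ, -L)) = 0 ↔ v = 2 * L * τ / (τ ^ 2 + L ^ 2)) ∧
    (v ≠ 2 * L * τ / (τ ^ 2 + L ^ 2) → Q (boost v (τ, L) - (τ, -L)) < 0) ∧
    (v < 2 * L * τ / (τ ^ 2 + L ^ 2) → Q (boost v (τ, L) - (τ, -L)) < 0) := by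
  obtain ⟨hv0, hv1⟩ := hv
  have hv2 : 0 < 1 - v ^ 2 := by nlinarith
  have hγ : 0 < lorentzGamma v := one_div_pos.mpr (Real.sqrt_pos.mpr hv2)
  have hγ2 : lorentzGamma v ^ 2 * (1 - v ^ 2) = 1 := by
    rw [lorentzGamma, div_pow, Real.sq_sqrt hv2.le, one_pow, one_div_mul_cancel hv2.ne']
  have hS : 0 < τ ^ 2 + L ^ 2 := by positivity
  have hD : 0 < τ ^ 2 - L ^ 2 := by nlinarith
  have hE : 0 < τ ^ 2 + L ^ 2 - 2 * L * τ * v := by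
    nlinarith [mul_pos (mul_pos hL (hL.trans hτL)) (sub_pos.mpr hv1), sq_pos_of_pos (sub_pos.mpr hτL)]
  have hF := add_pos (mul_pos hγ hE) hD
  have key := Q_boost_sub_mul_eq_neg_sq τ L v hγ2
  have hiff : v = 2 * L * τ / (τ ^ 2 + L ^ 2) ↔ (τ ^ 2 + L ^ 2) * v - 2 * L * τ = 0 := by
    rw [eq_div_iff hS.ne', sub_eq_zero, mul_comm]
  have hneg : v ≠ 2 * L * τ / (τ ^ 2 + L ^ 2) → Q (boost v (τ, L) - (τ, -L)) < 0 := by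
    intro hne
    have hpos := sq_pos_of_ne_zero (mul_ne_zero hγ.ne' (mt hiff.mpr hne))
    exact neg_of_mul_neg_left (by linarith) hF.le
  refine ⟨⟨fun h => ?_, fun h => ?_⟩, hneg, fun h => hneg h.ne⟩
  · by_contra hne
    exact (hneg hne).ne h
  · rw [hiff.mp h] at key
    exact (mul_eq_zero.mp (key.trans (by ring))).resolve_right hF.ne'
end

section
/- Fix τ > L > 0 and set x_A = (τ, −L), x_B = (τ, L) in two-dimensional Minkowski space. Then for every v with 0 < v < 2Lτ/(τ² + L²), the four points x_A, x_B, Λ_v x_A, Λ_v x_B are pairwise spacelike separated: Q(p − q) < 0 for every pair of distinct points p, q among them. -/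
theorem Q_sub_comm (p q : ℝ × ℝ) : Q (p - q) = Q (q - p) := by
  simp only [Q, Prod.fst_sub, Prod.snd_sub]
  ring

theorem lorentzGamma_pos {v : ℝ} (hv : v ^ 2 < 1) : 0 < lorentzGamma v :=
  one_div_pos.mpr (Real.sqrt_pos.mpr (sub_pos.mpr hv))

theorem lorentzGamma_sq_mul {v : ℝ} (hv : v ^ 2 < 1) :
    lorentzGamma v ^ 2 * (1 - v ^ 2) = 1 := by
  have h : 0 < 1 - v ^ 2 := sub_pos.mpr hv
  rw [lorentzGamma, div_pow, Real.sq_sqrt h.le, one_pow, one_div_mul_cancel h.ne']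

theorem one_lt_lorentzGamma {v : ℝ} (hv0 : 0 < v) (hv : v ^ 2 < 1) : 1 < lorentzGamma v := by
  have hg := lorentzGamma_pos hv
  have hg2 := lorentzGamma_sq_mul hv
  have : 0 < (lorentzGamma v * v) ^ 2 := by positivity
  nlinarith

theorem boost_sub (v : ℝ) (p q : ℝ × ℝ) : boost v p - boost v q = boost v (p - q) := by
  ext <;> simp only [boost, Prod.fst_sub, Prod.snd_sub] <;> ring

/-- Lorentz boosts preserve the Minkowski quadratic form. -/
theorem Q_boost {v : ℝ} (hv : v ^ 2 < 1) (p : ℝ × ℝ) : Q (boost v p) = Q p := by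
  simp only [Q, boost]
  linear_combination (p.1 ^ 2 - p.2 ^ 2) * lorentzGamma_sq_mul hv

/-- Polarization of `Q` for the difference of a point and a boosted point. -/
theorem Q_sub_boost {v : ℝ} (hv : v ^ 2 < 1) (p q : ℝ × ℝ) :
    Q (p - boost v q) = Q p + Q q -
      2 * (lorentzGamma v * (p.1 * (q.1 - v * q.2) - p.2 * (q.2 - v * q.1))) := by
  rw [← Q_boost hv q]
  simp only [Q, boost, Prod.fst_sub, Prod.snd_sub]
  ring

/-- Hyperbolic reversed Cauchy–Schwarz inequality, strict away from `v = b / a`. -/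
theorem lt_lorentzGamma_mul_sub {a b s v : ℝ} (hv : v ^ 2 < 1) (hs : s ^ 2 = a ^ 2 - b ^ 2)
    (hpos : 0 < a - v * b) (hne : v * a < b) : s < lorentzGamma v * (a - v * b) := by
  have hg := lorentzGamma_pos hv
  refine lt_of_pow_lt_pow_left₀ 2 (by positivity) ?_
  have h : 0 < (lorentzGamma v * (b - v * a)) ^ 2 :=
    pow_pos (mul_pos hg (sub_pos.mpr hne)) 2
  have key : (lorentzGamma v * (a - v * b)) ^ 2 = s ^ 2 + (lorentzGamma v * (b - v * a)) ^ 2 := by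
    linear_combination (a ^ 2 - b ^ 2) * lorentzGamma_sq_mul hv - hs
  linarith

/-- Step 1 of Theorem 1 of the paper: with `x_A = (τ, −L)`, `x_B = (τ, L)` for
`τ > L > 0`, and any boost velocity `0 < v < 2Lτ/(τ² + L²)`, the four points
`x_A, x_B, Λ_v x_A, Λ_v x_B` are pairwise spacelike separated. -/
theorem four_points_pairwise_spacelike (τ L : ℝ) (hL : 0 < L) (hτL : L < τ)
    (v : ℝ) (hv0 : 0 < v) (hv1 : v < 2 * L * τ / (τ ^ 2 + L ^ 2))
    (pts : Fin 4 → ℝ × ℝ)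
    (hpts : pts = ![(τ, -L), (τ, L), boost v (τ, -L), boost v (τ, L)]) :
    ∀ i j : Fin 4, i ≠ j → Q (pts i - pts j) < 0 := by
  have ha : 0 < τ ^ 2 + L ^ 2 := by positivity
  have hτ : 0 < τ := hL.trans hτL
  have hva : v * (τ ^ 2 + L ^ 2) < 2 * L * τ := (lt_div_iff₀ ha).mp hv1
  have hba : 2 * L * τ < τ ^ 2 + L ^ 2 := by nlinarith [pow_pos (sub_pos.mpr hτL) 2]
  have hv_lt : v < 1 := by nlinarith
  have hv : v ^ 2 < 1 := by nlinarith
  have hs : 0 < τ ^ 2 - L ^ 2 := by nlinarith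
  have hb : 0 < 2 * L * τ := by positivity
  have hvb : 0 < v * (2 * L * τ) := mul_pos hv0 hb
  have hg := lorentzGamma_pos hv
  have hg1 := one_lt_lorentzGamma hv0 hv
  have hgs : τ ^ 2 - L ^ 2 < lorentzGamma v * (τ ^ 2 - L ^ 2) := lt_mul_of_one_lt_left hs hg1
  have hAB : Q ((τ, -L) - (τ, L)) < 0 := by
    simp only [Q, Prod.fst_sub, Prod.snd_sub]
    nlinarith
  have hAB' : Q (boost v (τ, -L) - boost v (τ, L)) < 0 := by
    rwa [boost_sub, Q_boost hv]
  have hAA' : Q ((τ, -L) - boost v (τ, -L)) < 0 := by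
    rw [Q_sub_boost hv]
    simp only [Q]
    linarith
  have hBB' : Q ((τ, L) - boost v (τ, L)) < 0 := by
    rw [Q_sub_boost hv]
    simp only [Q]
    linarith
  have hcross : τ ^ 2 - L ^ 2 < lorentzGamma v * (τ ^ 2 + L ^ 2 - v * (2 * L * τ)) :=
    lt_lorentzGamma_mul_sub hv (by ring) (by nlinarith) hva
  have hA_B' : Q ((τ, -L) - boost v (τ, L)) < 0 := by
    rw [Q_sub_boost hv]
    simp only [Q]
    linarith
  have hB_A' : Q ((τ, L) - boost v (τ, -L)) < 0 := by
    rw [Q_sub_boost hv]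
    simp only [Q]
    have := mul_pos hg hvb
    linarith
  subst hpts
  intro i j hij
  wlog hlt : i < j generalizing i j
  · rw [Q_sub_comm]
    exact this j i hij.symm (lt_of_le_of_ne (not_lt.mp hlt) hij.symm)
  fin_cases i <;> fin_cases j <;> first | exact absurd hlt (by decide) | assumption
end
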